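/- arXiv:math/0411134 — 3 statements merged into one kernel-verified Lean document; each statement's English description precedes it below -/
import Mathlib

section
/- Let L be a lattice on Euclidean space E and v ∈ L. Then v is orthogonally decomposable if and only if there exists w ∈ L with w ≠ v, w ≠ −v, v − w ∈ 2L and ||v|| = ||w||. -/
open scoped RealInnerProductSpace

noncomputable section

abbrev Euc (n : ℕ) := EuclideanSpace ℝ (Fin n)

/-- A (full-rank) lattice on the euclidean space `Euc n`: a discrete `ℤ`-submodule
whose real span is everything. -/
def IsLattice {n : ℕ} (L : Submodule ℤ (Euc n)) : Prop :=
  DiscreteTopology L ∧ Submodule.span ℝ (L : Set (Euc n)) = ⊤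

/-- `v` is orthogonally decomposable in `L`: `v = x + y` with `x, y ∈ L \ {0}`
and `(x,y) = 0`. -/
def OrthDecomp {n : ℕ} (L : Submodule ℤ (Euc n)) (v : Euc n) : Prop :=
  ∃ x y : Euc n, x ∈ L ∧ y ∈ L ∧ x ≠ 0 ∧ y ≠ 0 ∧ v = x + y ∧ ⟪x, y⟫ = 0

/-- `v` is acutely decomposable in `L`: `v = x + y` with `x, y ∈ L \ {0}`
and `(x,y) ≥ 0`. -/
def AcuteDecomp {n : ℕ} (L : Submodule ℤ (Euc n)) (v : Euc n) : Prop :=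
  ∃ x y : Euc n, x ∈ L ∧ y ∈ L ∧ x ≠ 0 ∧ y ≠ 0 ∧ v = x + y ∧ 0 ≤ ⟪x, y⟫

/-- `v` is (linearly) decomposable in `L`: `v = x + y` with `x, y ∈ L` and
`‖v‖ > ‖x‖ ≥ ‖y‖`. -/
def LinDecomp {n : ℕ} (L : Submodule ℤ (Euc n)) (v : Euc n) : Prop :=
  ∃ x y : Euc n, x ∈ L ∧ y ∈ L ∧ v = x + y ∧ ‖x‖ < ‖v‖ ∧ ‖y‖ ≤ ‖x‖

/-- The sublattice `2L = {2 x | x ∈ L}`. -/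
def double {n : ℕ} (L : Submodule ℤ (Euc n)) : Submodule ℤ (Euc n) :=
  Submodule.map ((2 : ℤ) • (LinearMap.id : Euc n →ₗ[ℤ] Euc n)) L

/-- O'Meara 3.6. `v ∈ L` is orthogonally decomposable iff there is
`w ∈ L` with `w ≠ ±v`, `v - w ∈ 2L` and `‖v‖ = ‖w‖`. -/
theorem orthDecomp_iff {n : ℕ} (L : Submodule ℤ (Euc n)) (hL : IsLattice L)
    (v : Euc n) (hv : v ∈ L) :
    OrthDecomp L v ↔ ∃ w ∈ L, w ≠ v ∧ w ≠ -v ∧ v - w ∈ double L ∧ ‖v‖ = ‖w‖ := by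
  have mem_double : ∀ u : Euc n, u ∈ double L ↔ ∃ z ∈ L, (2 : ℝ) • z = u := by
    intro u
    simp only [double, Submodule.mem_map, LinearMap.smul_apply, LinearMap.id_apply]
    have h2 : ∀ z : Euc n, (2 : ℤ) • z = (2 : ℝ) • z := by
      intro z
      rw [two_smul, two_smul]
    simp only [h2]
  constructor
  · rintro ⟨x, y, hx, hy, hx0, hy0, rfl, hxy⟩
    refine ⟨x - y, L.sub_mem hx hy, ?_, ?_, ?_, ?_⟩
    · intro h
      apply hy0
      have h2 : (2 : ℝ) • y = 0 := by
        have : (2 : ℝ) • y = (x + y) - (x - y) := by module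
        rw [this, h, sub_self]
      simpa using h2
    · intro h
      apply hx0
      have h2 : (2 : ℝ) • x = 0 := by
        have : (2 : ℝ) • x = (x + y) + (x - y) := by module
        rw [this, h, add_neg_cancel]
      simpa using h2
    · rw [mem_double]
      exact ⟨y, hy, by module⟩
    · have h : ‖x + y‖ ^ 2 = ‖x - y‖ ^ 2 := by
        rw [norm_add_sq_real, norm_sub_sq_real, hxy]; ring
      exact (sq_eq_sq₀ (norm_nonneg _) (norm_nonneg _)).1 h
  · rintro ⟨w, hw, hwv, hwv', hd, hn⟩
    obtain ⟨z, hz, hzw⟩ := (mem_double _).1 hd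
    have hw' : w = v - (2 : ℝ) • z := by rw [hzw]; abel
    refine ⟨v - z, z, L.sub_mem hv hz, hz, ?_, ?_, by abel, ?_⟩
    · intro h
      apply hwv'
      rw [hw', ← sub_eq_zero.1 h]
      module
    · rintro rfl
      apply hwv
      rw [hw']; simp
    · have h : ‖v‖ ^ 2 = ‖v - (2 : ℝ) • z‖ ^ 2 := by rw [hn, hw']
      rw [norm_sub_sq_real, inner_smul_right, norm_smul] at h
      rw [inner_sub_left, real_inner_self_eq_norm_sq]
      norm_num at h
      nlinarith
end
end

section
/- Let L be a lattice on Euclidean space E and v ∈ L. Then v is acutely decomposable if and only if there exists w ∈ L with w ≠ v, w ≠ −v, v − w ∈ 2L and ||v|| ≥ ||w||. -/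
open scoped RealInnerProductSpace

noncomputable section

/-- O'Meara 3.7. `v ∈ L` is acutely decomposable iff there is
`w ∈ L` with `w ≠ ±v`, `v - w ∈ 2L` and `‖v‖ ≥ ‖w‖`. -/
theorem acuteDecomp_iff {n : ℕ} (L : Submodule ℤ (Euc n)) (hL : IsLattice L)
    (v : Euc n) (hv : v ∈ L) :
    AcuteDecomp L v ↔ ∃ w ∈ L, w ≠ v ∧ w ≠ -v ∧ v - w ∈ double L ∧ ‖w‖ ≤ ‖v‖ := by
  constructor
  · rintro ⟨x, y, hx, hy, hx0, hy0, rfl, h⟩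
    refine ⟨x - y, L.sub_mem hx hy, ?_, ?_, ?_, ?_⟩
    · intro e
      apply hy0
      have h2 : (2 : ℝ) • y = 0 := by
        have : (2 : ℝ) • y = (x + y) - (x - y) := by module
        rw [this, e, sub_self]
      simpa using h2
    · intro e
      apply hx0
      have h2 : (2 : ℝ) • x = 0 := by
        have : (2 : ℝ) • x = (x + y) + (x - y) := by module
        rw [this, e, add_neg_cancel]
      simpa using h2
    · refine Submodule.mem_map.2 ⟨y, hy, ?_⟩
      simp only [LinearMap.smul_apply, LinearMap.id_apply]
      module
    · rw [← sq_le_sq₀ (norm_nonneg _) (norm_nonneg _), norm_sub_sq_real, norm_add_sq_real]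
      linarith
  · rintro ⟨w, hw, h1, h2, hd, hn⟩
    obtain ⟨y, hy, e⟩ := Submodule.mem_map.1 hd
    simp only [LinearMap.smul_apply, LinearMap.id_apply] at e
    have hwe : w = (v - y) - y := by
      have : w = v - (v - w) := by abel
      rw [this, ← e]
      module
    refine ⟨v - y, y, L.sub_mem hv hy, hy, ?_, ?_, by abel, ?_⟩
    · intro h0
      apply h2
      rw [hwe, h0, sub_eq_zero.1 h0, zero_sub]
    · rintro rfl
      apply h1
      rw [hwe]
      simp
    · have hve : v = (v - y) + y := by abel
      rw [← sq_le_sq₀ (norm_nonneg _) (norm_nonneg _), hwe, norm_sub_sq_real] at hn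
      have h3 : ‖v‖ ^ 2 = ‖v - y‖ ^ 2 + 2 * ⟪v - y, y⟫ + ‖y‖ ^ 2 := by
        rw [← norm_add_sq_real, ← hve]
      linarith
end
end

section
/- Let L be a lattice of full rank n on Euclidean space E with minimum M = min{||v|| : v ∈ L, v ≠ 0}, and let S ⊆ L be a minimal generating system of L whose vectors all have norm at most B ∈ ℝ. Then |S| ≤ n + log₂(n!·(B/M)^n). -/
open scoped RealInnerProductSpace

noncomputable section

open MeasureTheory in
/-- Minkowski's first theorem for the cross-polytope. -/
lemma covol_lower {n : ℕ} (hn : 0 < n) (L : Submodule ℤ (Euc n)) [DiscreteTopology L]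
    [IsZLattice ℝ L] (M : ℝ) (hM0 : 0 < M) (hM : ∀ v ∈ L, v ≠ 0 → M ≤ ‖v‖) :
    M ^ n ≤ (n.factorial : ℝ) * ZLattice.covolume L := by
  classical
  haveI : Nonempty (Fin n) := ⟨⟨0, hn⟩⟩
  by_contra! hlt
  let s : Set (Euc n) := {x | ∑ i, |x i| < M}
  have hvol : volume s = ENNReal.ofReal (M ^ n * (2 ^ n / n.factorial)) := by
    have h1 := MeasureTheory.volume_sum_rpow_lt (Fin n) (p := 1) le_rfl M
    have hs : s = (MeasurableEquiv.toLp 2 (Fin n → ℝ)).symm ⁻¹' {x : Fin n → ℝ | (∑ i, |x i| ^ (1:ℝ)) ^ (1 / (1:ℝ)) < M} := by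
      ext x; simp [s]
    rw [hs, (EuclideanSpace.volume_preserving_symm_measurableEquiv_toLp (Fin n)).measure_preimage_equiv
      , h1, ← ENNReal.ofReal_pow hM0.le, ← ENNReal.ofReal_mul (by positivity)]
    rw [Fintype.card_fin, div_one, div_one, Real.Gamma_nat_eq_factorial, one_add_one_eq_two,
      Real.Gamma_two, mul_one]
  let b := Module.Free.chooseBasis ℤ L
  have fund := ZLattice.isAddFundamentalDomain b (volume : Measure (Euc n))
  have hcov := ZLattice.covolume_eq_measure_fundamentalDomain L volume fund
  have hfin : volume (ZSpan.fundamentalDomain (b.ofZLatticeBasis ℝ L)) ≠ ⊤ :=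
    (ZSpan.fundamentalDomain_isBounded _).measure_lt_top.ne
  haveI : Countable L.toAddSubgroup := inferInstanceAs (Countable L)
  obtain ⟨x, hx0, hxs⟩ := exists_ne_zero_mem_lattice_of_measure_mul_two_pow_lt_measure
    (L := L.toAddSubgroup) (μ := volume) (s := s) fund (by intro x hx; simpa [s] using hx)
    (by
      intro x hx y hy a c ha hc hac
      simp only [s, Set.mem_ofPred_eq] at hx hy ⊢
      have h1 : ∑ i, |(a • x + c • y) i| ≤ a * ∑ i, |x i| + c * ∑ i, |y i| := by
        rw [Finset.mul_sum, Finset.mul_sum, ← Finset.sum_add_distrib]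
        refine Finset.sum_le_sum fun i _ => ?_
        simp only [PiLp.add_apply, PiLp.smul_apply, smul_eq_mul]
        refine (abs_add_le _ _).trans ?_
        rw [abs_mul, abs_mul, abs_of_nonneg ha, abs_of_nonneg hc]
      refine h1.trans_lt ?_
      rcases ha.eq_or_lt with h | h
      · have : c = 1 := by linarith
        subst this; rw [← h]; simpa using hy
      · have hxx := mul_lt_mul_of_pos_left hx h
        have hyy := mul_le_mul_of_nonneg_left hy.le hc
        have : a * M + c * M = M := by rw [← add_mul, hac, one_mul]
        linarith)
    (by
      rw [hvol, ← ENNReal.ofReal_toReal hfin]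
      change ENNReal.ofReal (volume.real _) * _ < _
      rw [← hcov]
      simp only [finrank_euclideanSpace, Fintype.card_fin]
      rw [show (2:ENNReal) ^ n = ENNReal.ofReal (2 ^ n) by simp [ENNReal.ofReal_pow],
        ← ENNReal.ofReal_mul (ZLattice.covolume_pos L volume).le]
      refine (ENNReal.ofReal_lt_ofReal_iff (by positivity)).2 ?_
      have hf : (0:ℝ) < n.factorial := by positivity
      rw [← mul_div_assoc, lt_div_iff₀ hf]
      have h2 : (0:ℝ) < 2 ^ n := by positivity
      nlinarith [mul_lt_mul_of_pos_right hlt h2])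
  have h := hM x x.2 (by simpa using hx0)
  have h2 : ‖(x : Euc n)‖ ≤ ∑ i, |(x : Euc n) i| := by
    rw [EuclideanSpace.norm_eq]
    refine Real.sqrt_le_iff.2 ⟨by positivity, ?_⟩
    simpa using Finset.sum_sq_le_sq_sum_of_nonneg (s := Finset.univ)
      (f := fun i => |(x : Euc n) i|) (fun i _ => abs_nonneg _)
  have h3 : ∑ i, |(x : Euc n) i| < M := hxs
  linarith

open MeasureTheory in
/-- Hadamard's inequality. -/
lemma covol_upper {n : ℕ} (b : Module.Basis (Fin n) ℝ (Euc n)) (B : ℝ) (hB : ∀ i, ‖b i‖ ≤ B) :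
    ZLattice.covolume (Submodule.span ℤ (Set.range b)) ≤ B ^ n := by
  classical
  let b₀ := EuclideanSpace.basisFun (Fin n) ℝ
  rw [ZLattice.covolume_eq_measure_fundamentalDomain _ _ (ZSpan.isAddFundamentalDomain b volume),
    ZSpan.measureReal_fundamentalDomain b volume b₀.toBasis,
    measureReal_congr (ZSpan.fundamentalDomain_ae_parallelepiped b₀.toBasis volume)]
  have h1 : volume.real (parallelepiped b₀.toBasis) = 1 := by
    rw [measureReal_def, OrthonormalBasis.coe_toBasis, b₀.volume_parallelepiped]; simp
  rw [h1, mul_one]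
  haveI : Fact (Module.finrank ℝ (Euc n) = n) := ⟨by simp⟩
  rw [← b₀.toBasis.orientation.volumeForm_robust' b₀]
  refine (Orientation.abs_volumeForm_apply_le _ _).trans ?_
  refine (Finset.prod_le_prod (fun i _ => norm_nonneg _) (fun i _ => hB i)).trans ?_
  simp

/-- Chain of sublattices. -/
lemma chain_index {E : Type*} [AddCommGroup E] (S b : Set E) (hb : b ⊆ S)
    (hmin : ∀ v ∈ S, v ∉ Submodule.span ℤ (S \ {v}))
    (hfin : (Submodule.span ℤ b).toAddSubgroup.relIndex (Submodule.span ℤ S).toAddSubgroup ≠ 0)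
    (T : Finset E) (hT : (T : Set E) ⊆ S \ b) :
    2 ^ T.card ≤ (Submodule.span ℤ b).toAddSubgroup.relIndex
      (Submodule.span ℤ (b ∪ T)).toAddSubgroup := by
  classical
  induction T using Finset.induction_on with
  | empty => simp
  | insert v T hv ih =>
    have hT' : (T : Set E) ⊆ S \ b := fun x hx => hT (by simp [Finset.mem_coe.1 hx])
    have hvS : v ∈ S \ b := hT (by simp)
    specialize ih hT'
    rw [Finset.card_insert_of_notMem hv, pow_succ]
    have h1 : (Submodule.span ℤ b).toAddSubgroup ≤ (Submodule.span ℤ (b ∪ T)).toAddSubgroup :=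
      Submodule.span_mono (R := ℤ) Set.subset_union_left
    have h2 : (Submodule.span ℤ (b ∪ T)).toAddSubgroup ≤
        (Submodule.span ℤ (b ∪ ((insert v T : Finset E) : Set E))).toAddSubgroup :=
      Submodule.span_mono (R := ℤ) (Set.union_subset_union_right _ (by simp))
    have h3 : (Submodule.span ℤ (b ∪ ((insert v T : Finset E) : Set E))).toAddSubgroup ≤
        (Submodule.span ℤ S).toAddSubgroup :=
      Submodule.span_mono (R := ℤ) (Set.union_subset hb (hT.trans Set.sdiff_subset))
    have e1 := AddSubgroup.relIndex_mul_relIndex _ _ _ h1 h2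
    have e2 := AddSubgroup.relIndex_mul_relIndex _ _ _ (h1.trans h2) h3
    rw [← e1]
    refine Nat.mul_le_mul ih ?_
    have hne0 : (Submodule.span ℤ (b ∪ T)).toAddSubgroup.relIndex
        (Submodule.span ℤ (b ∪ ((insert v T : Finset E) : Set E))).toAddSubgroup ≠ 0 := by
      intro h; rw [h] at e1; rw [← e1] at e2; simp at e2; exact hfin e2.symm
    have hne1 : (Submodule.span ℤ (b ∪ T)).toAddSubgroup.relIndex
        (Submodule.span ℤ (b ∪ ((insert v T : Finset E) : Set E))).toAddSubgroup ≠ 1 := by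
      intro h
      rw [AddSubgroup.relIndex_eq_one] at h
      have hv1 : v ∈ Submodule.span ℤ (b ∪ T) :=
        h (Submodule.subset_span (R := ℤ) (by simp))
      refine hmin v hvS.1 (Submodule.span_mono ?_ hv1)
      rintro x (hx | hx)
      · exact ⟨hb hx, fun h => hvS.2 (h ▸ hx)⟩
      · exact ⟨(hT' hx).1, fun h => hv (h ▸ hx)⟩
    omega

/-- covering theorem. Let `L` be a lattice of full rank `n` with
minimum `M` and let `S` be a minimal generating system of `L` all of whose vectors
have norm at most `B`.  Then `S` is finite with `|S| ≤ n + log₂(n! (B/M)^n)`. -/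
theorem covering_theorem {n : ℕ} (L : Submodule ℤ (Euc n)) (hL : IsLattice L)
    (M B : ℝ) (hM : IsLeast {r : ℝ | ∃ v ∈ L, v ≠ 0 ∧ ‖v‖ = r} M)
    (S : Set (Euc n)) (hSB : ∀ v ∈ S, ‖v‖ ≤ B)
    (hSspan : Submodule.span ℤ S = L)
    (hmin : ∀ S' : Set (Euc n), S' ⊂ S → Submodule.span ℤ S' < L) :
    S.Finite ∧ (S.ncard : ℝ) ≤ n + Real.logb 2 ((n.factorial : ℝ) * (B / M) ^ n) := by
  classical
  obtain ⟨hdisc, hfull⟩ := hL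
  haveI := hdisc
  haveI : IsZLattice ℝ L := ⟨hfull⟩
  obtain ⟨⟨v0, hv0L, hv0, hv0M⟩, hleast⟩ := hM
  have hM0 : 0 < M := hv0M ▸ norm_pos_iff.2 hv0
  have hn : 0 < n := by
    rcases Nat.eq_zero_or_pos n with rfl | h
    · exact absurd (Subsingleton.elim v0 0) hv0
    · exact h
  have hMle : ∀ v ∈ L, v ≠ 0 → M ≤ ‖v‖ := fun v hv h => hleast ⟨v, hv, h, rfl⟩
  have hSL : S ⊆ L := hSspan ▸ Submodule.subset_span
  have hSfin : S.Finite := by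
    have : (Metric.closedBall (0 : Euc n) B ∩ (L : Set (Euc n))).Finite := by
      refine Metric.finite_isBounded_inter_isClosed DiscreteTopology.isDiscrete
        Metric.isBounded_closedBall ?_
      exact AddSubgroup.isClosed_of_discrete (H := L.toAddSubgroup)
    exact this.subset fun v hv => ⟨by simpa using hSB v hv, hSL hv⟩
  refine ⟨hSfin, ?_⟩
  have hmin' : ∀ v ∈ S, v ∉ Submodule.span ℤ (S \ {v}) := by
    intro v hv hmem
    have h := hmin (S \ {v}) (Set.diff_singleton_ssubset.2 hv)
    refine h.not_ge ?_
    rw [← hSspan, Submodule.span_le]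
    intro x hx
    by_cases hxv : x = v
    · exact hxv ▸ hmem
    · exact Submodule.subset_span ⟨hx, hxv⟩
  obtain ⟨b, hbS, -, hSb, hbi⟩ := exists_linearIndepOn_id_extension (K := ℝ)
    (linearIndepOn_empty ℝ (id : Euc n → Euc n)) (Set.empty_subset S)
  have hbspan : Submodule.span ℝ b = ⊤ := by
    rw [eq_top_iff, ← hfull, Submodule.span_le, ← hSspan]
    intro x hx
    have : Submodule.span ℤ S ≤ (Submodule.span ℝ b).restrictScalars ℤ :=
      Submodule.span_le.2 hSb
    exact this hx
  have hbfin : b.Finite := hSfin.subset hbS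
  haveI : Fintype b := hbfin.fintype
  let bb : Module.Basis b ℝ (Euc n) := Module.Basis.mk (v := ((↑) : b → Euc n)) hbi
    (by simp [hbspan])
  have hbb : ⇑bb = ((↑) : b → Euc n) := Module.Basis.coe_mk _ _
  have hcard : Fintype.card b = n := by
    rw [← Module.finrank_eq_card_basis bb]; simp
  let e : b ≃ Fin n := Fintype.equivFinOfCardEq hcard
  let b' := bb.reindex e
  have hrange : Set.range b' = b := by
    rw [Module.Basis.range_reindex, hbb, Subtype.range_coe]
  have hup := covol_upper b' B (fun i => by
    rw [Module.Basis.reindex_apply, hbb]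
    exact hSB _ (hbS (e.symm i).2))
  have hlow := covol_lower hn L M hM0 hMle
  have hle : Submodule.span ℤ (Set.range b') ≤ L := by
    rw [hrange, ← hSspan]; exact Submodule.span_mono hbS
  have hidx := ZLattice.covolume_div_covolume_eq_relIndex' _ L hle
  have hLpos := ZLattice.covolume_pos L MeasureTheory.volume
  have hbpos := ZLattice.covolume_pos (Submodule.span ℤ (Set.range b')) MeasureTheory.volume
  have hidx0 : (Submodule.span ℤ b).toAddSubgroup.relIndex
      (Submodule.span ℤ S).toAddSubgroup ≠ 0 := by
    rw [hSspan]; rw [← hrange]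
    intro h
    rw [h] at hidx
    have := div_pos hbpos hLpos
    rw [hidx] at this
    simp at this
  obtain ⟨T, hT⟩ : ∃ T : Finset (Euc n), (T : Set (Euc n)) = S \ b :=
    ⟨(hSfin.sdiff (t := b)).toFinset, by simp⟩
  have hch := chain_index S b hbS hmin' hidx0 T hT.le
  have hun : b ∪ (T : Set (Euc n)) = S := by
    rw [hT]
    simp [Set.union_eq_self_of_subset_left hbS]
  rw [hun, hSspan, ← hrange] at hch
  have hk : T.card + n = S.ncard := by
    rw [← Set.ncard_coe_finset, hT, ← Set.ncard_sdiff_add_ncard_of_subset hbS hSfin]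
    congr 1
    rw [Set.ncard_eq_toFinset_card', Set.toFinset_card, hcard]
  have hfinal : (2:ℝ) ^ T.card ≤ n.factorial * (B / M) ^ n := by
    refine le_trans (by exact_mod_cast hch : _ ≤ (((Submodule.span ℤ (Set.range b')).toAddSubgroup.relIndex
      L.toAddSubgroup : ℕ) : ℝ)) ?_
    rw [← hidx, div_le_iff₀ hLpos, div_pow, mul_div_assoc', div_mul_eq_mul_div,
      le_div_iff₀ (by positivity)]
    have hc0 : (0:ℝ) ≤ n.factorial * ZLattice.covolume L := by positivity
    have := mul_le_mul hup hlow (by positivity) (hbpos.le.trans hup)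
    linarith
  have hlog : (T.card : ℝ) ≤
      Real.logb 2 ((n.factorial : ℝ) * (B / M) ^ n) := by
    rw [Real.le_logb_iff_rpow_le one_lt_two (lt_of_lt_of_le (by positivity) hfinal)]
    rw [Real.rpow_natCast]; exact hfinal
  rw [← hk]; push_cast; linarith
end
end
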